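/- Fix j ∈ {1,2}, and for each α_j ∈ 𝓐_j let V_{j,α_j} : (ℝ³)^{𝓡_{3−j} × 𝓐_{3−j}} → ℝ be translation-invariant. Then for all x ∈ ℝ² and all γ_{3−j} ∈ Γ_{3−j}: (1/|Γ_j|) Σ_{α_j ∈ 𝓐_j} V_{j,α_j}( (Y_j(x, α_j) − Y_{3−j}(R_{3−j} + γ_{3−j}, α_{3−j}))_{R_{3−j} ∈ 𝓡_{3−j}, α_{3−j} ∈ 𝓐_{3−j}} ) = Ψ_j[u]({x}_𝓜, {x − γ_{3−j}}_{3−j}). Moreover, if x = R_j ∈ 𝓡_j and γ_{3−j} = 0, then this quantity equals Ψ_j[u]({R_j}_𝓜, D_{j→3−j} {R_j}_𝓜 ) interpreted via the stencil, i.e., it equals Φ̄_{j,0}[u]({R_j}_𝓜) where Φ̄_{j,0}[u](x) := Ψ_j[u](x, D_{j→3−j} x). -/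

import Mathlib

open scoped Real BigOperators
open MeasureTheory Filter Topology Matrix

noncomputable section

/-- The 2×2 rotation matrix through angle `φ`. -/
def Rot (φ : ℝ) : Matrix (Fin 2) (Fin 2) ℝ :=
  !![Real.cos φ, -Real.sin φ; Real.sin φ, Real.cos φ]

/-- Euclidean norm on `ℝ²`. -/
def norm2 (v : Fin 2 → ℝ) : ℝ := Real.sqrt (v 0 ^ 2 + v 1 ^ 2)

/-- Euclidean norm on `ℝ³`. -/
def norm3 (v : Fin 3 → ℝ) : ℝ := Real.sqrt (v 0 ^ 2 + v 1 ^ 2 + v 2 ^ 2)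

/-- Cast an integer vector to a real vector. -/
def iv (n : Fin 2 → ℤ) : Fin 2 → ℝ := fun i => (n i : ℝ)

/-- The lattice `M ℤ²`. -/
def lat (M : Matrix (Fin 2) (Fin 2) ℝ) : Set (Fin 2 → ℝ) :=
  {v | ∃ n : Fin 2 → ℤ, v = M.mulVec (iv n)}

/-- The unit cell `M [0,1)²`. -/
def cell (M : Matrix (Fin 2) (Fin 2) ℝ) : Set (Fin 2 → ℝ) :=
  {v | ∃ t : Fin 2 → ℝ, (∀ i, t i ∈ Set.Ico (0 : ℝ) 1) ∧ v = M.mulVec t}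

/-- The reciprocal matrix `2π M⁻ᵀ`. -/
def recip (M : Matrix (Fin 2) (Fin 2) ℝ) : Matrix (Fin 2) (Fin 2) ℝ :=
  (2 * π) • (M⁻¹)ᵀ

/-- A pair of lattices with reciprocal-lattice matrices `B1`, `B2` is incommensurate iff
`G₁ + G₂ = 0` with `G_k` in the respective reciprocal lattice implies `G₁ = G₂ = 0`. -/
def Incommensurate (B1 B2 : Matrix (Fin 2) (Fin 2) ℝ) : Prop :=
  ∀ G1 ∈ lat B1, ∀ G2 ∈ lat B2, G1 + G2 = 0 → G1 = 0 ∧ G2 = 0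

/-- Euclidean distance from `v ∈ ℝ²` to the integer lattice `ℤ²`. -/
def distZ2 (v : Fin 2 → ℝ) : ℝ := ⨅ m : Fin 2 → ℤ, norm2 (v - iv m)

/-- `θ` is a `(q,K,σ)`-Diophantine 2D rotation. -/
def IsDiophantine (A : Matrix (Fin 2) (Fin 2) ℝ) (q K σ θ : ℝ) : Prop :=
  ∀ n : Fin 2 → ℤ, n ≠ 0 →
    K / norm2 (iv n) ^ (2 * σ) ≤ distZ2 ((q • (Aᵀ * Rot θ * (A⁻¹)ᵀ)).mulVec (iv n)) ∧
    K / norm2 (iv n) ^ (2 * σ) ≤ distZ2 ((q⁻¹ • (Aᵀ * Rot (-θ) * (A⁻¹)ᵀ)).mulVec (iv n))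

/-- The moiré length scale ratio `ρ_𝓜`. -/
def rhoM (q θ : ℝ) : ℝ :=
  (Real.sqrt ((Real.sqrt q - (Real.sqrt q)⁻¹) ^ 2 + 4 * Real.sin (θ / 2) ^ 2))⁻¹

/-- Riemann zeta function (for real `s > 1`, via its Dirichlet series). -/
def zetaR (s : ℝ) : ℝ := ∑' n : ℕ, ((n : ℝ) + 1) ^ (-s)

/-- Operator (spectral) norm of a 2×2 real matrix w.r.t. the Euclidean norm. -/
def opNorm2 (M : Matrix (Fin 2) (Fin 2) ℝ) : ℝ :=
  ⨆ x : {x : Fin 2 → ℝ // norm2 x ≤ 1}, norm2 (M.mulVec x.1)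

/-- Embedding `ℝ² ↪ ℝ³`, `x ↦ (x, 0)`. -/
def emb (x : Fin 2 → ℝ) : Fin 3 → ℝ := ![x 0, x 1, 0]

/-- Japanese bracket `⟨x⟩ = (1 + |x|²)^{1/2}` on `ℝ³`. -/
def jap3 (x : Fin 3 → ℝ) : ℝ := Real.sqrt (1 + norm3 x ^ 2)

/-- The region `ℝ² × [−L, L] ⊆ ℝ³`. -/
def slab (L : ℝ) : Set (Fin 3 → ℝ) := {x | x 2 ∈ Set.Icc (-L) L}

/-- Euclidean inner product on `ℝ²`. -/
def dot2 (a b : Fin 2 → ℝ) : ℝ := ∑ i, a i * b i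

/-- The index box `⟦−N, N⟧²`. -/
def box (N : ℕ) : Finset (Fin 2 → ℤ) :=
  Finset.Icc (fun _ => -(N : ℤ)) (fun _ => (N : ℤ))

/-- The normalized Dirichlet kernel `Δ_N^j` of the lattice `A_j ℤ²`. -/
def Dir (Aj : Matrix (Fin 2) (Fin 2) ℝ) (N : ℕ) (G : Fin 2 → ℝ) : ℂ :=
  (((2 * N + 1 : ℝ)) ^ 2)⁻¹ •
    ∑ n ∈ box N, Complex.exp (Complex.I * (dot2 G (Aj.mulVec (iv n)) : ℝ))

/-- The sublattice-averaged generalized interlayer site potential `Ψ_j[u](x,y)` for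
many-body potentials; layer `a` plays the role of layer `j`, layer `b` that of `3−j`.
The stencil over `𝓡_{3−j} × 𝓐_{3−j}` is parametrized by `(Fin 2 → ℤ) × 𝓐b`,
with `R_{3−j} = A_b n`. -/
def PsiMB {𝓐a 𝓐b : Type} [Fintype 𝓐a]
    (Aa Ab : Matrix (Fin 2) (Fin 2) ℝ)
    (V : 𝓐a → (((Fin 2 → ℤ) × 𝓐b) → Fin 3 → ℝ) → ℝ)
    (τa : 𝓐a → Fin 2 → ℝ) (τb : 𝓐b → Fin 2 → ℝ)
    (ua : (Fin 2 → ℝ) → 𝓐a → Fin 3 → ℝ) (ub : (Fin 2 → ℝ) → 𝓐b → Fin 3 → ℝ)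
    (x y : Fin 2 → ℝ) : ℝ :=
  |Aa.det|⁻¹ *
    ∑ αa : 𝓐a, V αa (fun p =>
      emb y - emb (Ab.mulVec (iv p.1)) + emb (τa αa) - emb (τb p.2) +
        ua x αa - ub (x - y + Ab.mulVec (iv p.1)) p.2)

theorem emb_add' (x y : Fin 2 → ℝ) : emb (x + y) = emb x + emb y := by
  ext i; fin_cases i <;> simp [emb]

theorem iv_add' (m n : Fin 2 → ℤ) : iv (m + n) = iv m + iv n := by
  ext i; simp [iv]

theorem iv_neg' (m : Fin 2 → ℤ) : iv (-m) = - iv m := by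
  ext i; simp [iv]

theorem rot_det (φ : ℝ) : (Rot φ).det = 1 := by
  have := Real.sin_sq_add_cos_sq φ
  simp [Rot, Matrix.det_fin_two]; nlinarith

theorem stencil_shift {𝓐a 𝓐b : Type} [Fintype 𝓐a]
    (Aa Ab AM : Matrix (Fin 2) (Fin 2) ℝ)
    (τa : 𝓐a → Fin 2 → ℝ) (τb : 𝓐b → Fin 2 → ℝ)
    (ua : (Fin 2 → ℝ) → 𝓐a → Fin 3 → ℝ) (ub : (Fin 2 → ℝ) → 𝓐b → Fin 3 → ℝ)
    (huaper : ∀ (x : Fin 2 → ℝ), ∀ rM ∈ lat AM, ∀ α, ua (x + rM) α = ua x α)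
    (hubper : ∀ (x : Fin 2 → ℝ), ∀ rM ∈ lat AM, ∀ α, ub (x + rM) α = ub x α)
    (V : 𝓐a → (((Fin 2 → ℤ) × 𝓐b) → Fin 3 → ℝ) → ℝ)
    (hVtrans : ∀ (αa : 𝓐a) (a : ((Fin 2 → ℤ) × 𝓐b) → Fin 3 → ℝ) (m : Fin 2 → ℤ),
      V αa (fun p => a (p.1 + m, p.2)) = V αa a)
    (x z γb y : Fin 2 → ℝ) (hz : x - z ∈ lat AM) (hy : x - γb - y ∈ lat Ab) :
      |Aa.det|⁻¹ *
          (∑ αa : 𝓐a, V αa (fun p =>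
            (emb x + emb (τa αa) + ua x αa) -
              (emb (Ab.mulVec (iv p.1) + γb) + emb (τb p.2) +
                ub (Ab.mulVec (iv p.1) + γb) p.2))) =
        PsiMB Aa Ab V τa τb ua ub z y := by
  obtain ⟨m, hm⟩ := hy
  unfold PsiMB
  congr 1
  refine Finset.sum_congr rfl fun αa _ => ?_
  rw [← hVtrans αa _ m]
  congr 1
  funext p
  have h1 : ua x αa = ua z αa := by
    rw [← huaper z _ hz]; congr 1; abel
  have hx : x = y + γb + Ab.mulVec (iv m) := by rw [← hm]; abel
  have h2 : ub (Ab.mulVec (iv (p.1 + m)) + γb) p.2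
      = ub (z - y + Ab.mulVec (iv p.1)) p.2 := by
    rw [← hubper (z - y + Ab.mulVec (iv p.1)) _ hz]
    congr 1
    rw [hx, iv_add', Matrix.mulVec_add]; abel
  have h3 : emb x = emb y + emb γb + emb (Ab.mulVec (iv m)) := by
    rw [← emb_add', ← emb_add', ← hx]
  simp only
  rw [h1, h2, h3, iv_add', Matrix.mulVec_add, emb_add', emb_add']
  abel

theorem lat_neg' {M : Matrix (Fin 2) (Fin 2) ℝ} {v : Fin 2 → ℝ} (h : v ∈ lat M) : -v ∈ lat M := by
  obtain ⟨n, rfl⟩ := h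
  exact ⟨-n, by rw [iv_neg', Matrix.mulVec_neg]⟩

theorem lat_add' {M : Matrix (Fin 2) (Fin 2) ℝ} {v w : Fin 2 → ℝ}
    (h : v ∈ lat M) (h' : w ∈ lat M) : v + w ∈ lat M := by
  obtain ⟨n, rfl⟩ := h
  obtain ⟨m, rfl⟩ := h'
  exact ⟨n + m, by rw [iv_add', Matrix.mulVec_add]⟩

/-- Lemma: lattice reduction formula for the interlayer site potential. -/
theorem site_potential_reduction (θ q : ℝ) (hq : 0 < q)
    (A A1 A2 B1 B2 BM AM : Matrix (Fin 2) (Fin 2) ℝ)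
    (hA : IsUnit A.det)
    (hA1 : A1 = (Real.sqrt q)⁻¹ • (Rot (-(θ / 2)) * A))
    (hA2 : A2 = Real.sqrt q • (Rot (θ / 2) * A))
    (hB1 : B1 = recip A1) (hB2 : B2 = recip A2)
    (hBM : BM = B1 - B2) (hBMinv : IsUnit BM.det)
    (hAM : AM = recip BM)
    (Aa Ab Dj : Matrix (Fin 2) (Fin 2) ℝ)
    (hcase : (Aa = A1 ∧ Ab = A2) ∨ (Aa = A2 ∧ Ab = A1))
    (hDj : Dj = 1 - Ab * Aa⁻¹)
    -- fractional-part maps {·}_𝓜 and {·}_{3−j}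
    (FracM Fracb : (Fin 2 → ℝ) → (Fin 2 → ℝ))
    (hFracM : ∀ x : Fin 2 → ℝ, x - FracM x ∈ lat AM ∧ FracM x ∈ cell AM)
    (hFracb : ∀ x : Fin 2 → ℝ, x - Fracb x ∈ lat Ab ∧ Fracb x ∈ cell Ab)
    (𝓐a 𝓐b : Type) [Fintype 𝓐a] [Fintype 𝓐b]
    (τa : 𝓐a → Fin 2 → ℝ) (τb : 𝓐b → Fin 2 → ℝ)
    (ua : (Fin 2 → ℝ) → 𝓐a → Fin 3 → ℝ) (ub : (Fin 2 → ℝ) → 𝓐b → Fin 3 → ℝ)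
    -- u is 𝓡_𝓜-periodic
    (huaper : ∀ (x : Fin 2 → ℝ), ∀ rM ∈ lat AM, ∀ α, ua (x + rM) α = ua x α)
    (hubper : ∀ (x : Fin 2 → ℝ), ∀ rM ∈ lat AM, ∀ α, ub (x + rM) α = ub x α)
    (V : 𝓐a → (((Fin 2 → ℤ) × 𝓐b) → Fin 3 → ℝ) → ℝ)
    -- V is translation-invariant
    (hVtrans : ∀ (αa : 𝓐a) (a : ((Fin 2 → ℤ) × 𝓐b) → Fin 3 → ℝ) (m : Fin 2 → ℤ),
      V αa (fun p => a (p.1 + m, p.2)) = V αa a) :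
    -- general reduction formula
    (∀ (x : Fin 2 → ℝ), ∀ γb ∈ cell Ab,
      |Aa.det|⁻¹ *
          (∑ αa : 𝓐a, V αa (fun p =>
            (emb x + emb (τa αa) + ua x αa) -
              (emb (Ab.mulVec (iv p.1) + γb) + emb (τb p.2) +
                ub (Ab.mulVec (iv p.1) + γb) p.2))) =
        PsiMB Aa Ab V τa τb ua ub (FracM x) (Fracb (x - γb))) ∧
    -- the case x = R_j ∈ 𝓡_j and γ_{3−j} = 0
    (∀ n : Fin 2 → ℤ,
      |Aa.det|⁻¹ *
          (∑ αa : 𝓐a, V αa (fun p =>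
            (emb (Aa.mulVec (iv n)) + emb (τa αa) + ua (Aa.mulVec (iv n)) αa) -
              (emb (Ab.mulVec (iv p.1)) + emb (τb p.2) +
                ub (Ab.mulVec (iv p.1)) p.2))) =
        PsiMB Aa Ab V τa τb ua ub (FracM (Aa.mulVec (iv n)))
          (Dj.mulVec (FracM (Aa.mulVec (iv n))))) := by
  refine ⟨fun x γb _ => stencil_shift Aa Ab AM τa τb ua ub huaper hubper V hVtrans x _ γb _
    (hFracM x).1 (hFracb _).1, fun n => ?_⟩
  have hs : Real.sqrt q ≠ 0 := (Real.sqrt_pos.2 hq).ne'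
  have hA0 : A.det ≠ 0 := hA.ne_zero
  have hd1 : IsUnit A1.det := by
    rw [hA1, Matrix.det_smul, Matrix.det_mul, rot_det]; simp [hs, hA0]
  have hd2 : IsUnit A2.det := by
    rw [hA2, Matrix.det_smul, Matrix.det_mul, rot_det]; simp [hs, hA0]
  have hC : (A1⁻¹ - A2⁻¹) * AM = 1 := by
    have hB : BM = (2 * π) • (A1⁻¹ - A2⁻¹)ᵀ := by
      rw [hBM, hB1, hB2, recip, recip, Matrix.transpose_sub, smul_sub]
    have h : BM⁻¹ * BM = 1 := Matrix.nonsing_inv_mul _ hBMinv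
    nth_rewrite 2 [hB] at h
    have h' := congrArg Matrix.transpose h
    rw [Matrix.transpose_mul, Matrix.transpose_smul, Matrix.transpose_transpose,
      Matrix.transpose_one] at h'
    rw [hAM, recip, Matrix.mul_smul, ← Matrix.smul_mul]
    exact h'
  have hda : IsUnit Aa.det ∧ IsUnit Ab.det := by
    rcases hcase with ⟨rfl, rfl⟩ | ⟨rfl, rfl⟩
    · exact ⟨hd1, hd2⟩
    · exact ⟨hd2, hd1⟩
  have hD : Dj = Ab * (Ab⁻¹ - Aa⁻¹) := by
    rw [hDj, Matrix.mul_sub, Matrix.mul_nonsing_inv _ hda.2]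
  have hDA : Dj * AM = Ab ∨ Dj * AM = -Ab := by
    rw [hD, Matrix.mul_assoc]
    rcases hcase with ⟨rfl, rfl⟩ | ⟨rfl, rfl⟩
    · right
      rw [← neg_sub, Matrix.neg_mul, hC, Matrix.mul_neg, Matrix.mul_one]
    · left
      rw [hC, Matrix.mul_one]
  obtain ⟨m, hm⟩ := (hFracM (Aa.mulVec (iv n))).1
  have hlat : Dj.mulVec (AM.mulVec (iv m)) ∈ lat Ab := by
    rw [Matrix.mulVec_mulVec]
    rcases hDA with h | h
    · rw [h]; exact ⟨m, rfl⟩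
    · rw [h, Matrix.neg_mulVec]; exact lat_neg' ⟨m, rfl⟩
  have hDR : Dj.mulVec (Aa.mulVec (iv n)) = Aa.mulVec (iv n) - Ab.mulVec (iv n) := by
    rw [Matrix.mulVec_mulVec, hDj, Matrix.sub_mul, Matrix.one_mul, Matrix.mul_assoc,
      Matrix.nonsing_inv_mul _ hda.1, Matrix.mul_one, Matrix.sub_mulVec]
  have hy : Aa.mulVec (iv n) - 0 - Dj.mulVec (FracM (Aa.mulVec (iv n))) ∈ lat Ab := by
    have e : FracM (Aa.mulVec (iv n)) = Aa.mulVec (iv n) - AM.mulVec (iv m) := by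
      rw [← hm]; abel
    rw [e, Matrix.mulVec_sub, hDR]
    have := lat_add' (M := Ab) ⟨n, rfl⟩ hlat
    convert this using 1
    abel
  have := stencil_shift Aa Ab AM τa τb ua ub huaper hubper V hVtrans _ _ 0 _
    (hFracM (Aa.mulVec (iv n))).1 hy
  simpa only [add_zero] using this

end
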